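/- Let 𝕎 = ⋃_{i=0}^{J−1} [f_i − W_i, f_i + W_i] ⊆ [−1/2, 1/2] be a union of J ≥ 1 pairwise disjoint closed intervals with half-widths W_i ∈ (0, 1/2), and fix ε ∈ (0, 1). Then there exist constants Ĉ₁ > 0, Ĉ₂ > 0 and an integer N̂₁ ≥ 1 (depending only on 𝕎 and ε) such that for every N ≥ N̂₁ and every index l with 0 ≤ l ≤ J − 1 + Σ_{i=0}^{J−1} ⌊2NW_i(1−ε)⌋ and l ≤ N−1, the l-th eigenvalue satisfies 1 − λ_{N,𝕎}^{(l)} ≤ Ĉ₁·N²·e^{−Ĉ₂·N}. -/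

import Mathlib

open MeasureTheory Matrix Real Set

/-- The 1-D prolate matrix `B_{N,𝕎}` with entries `∫_𝕎 exp(2πi f (m−n)) df`. -/
noncomputable def prolate1D (N : ℕ) (𝕎 : Set ℝ) : Matrix (Fin N) (Fin N) ℂ :=
  fun m n => ∫ f in 𝕎,
    Complex.exp (2 * (Real.pi : ℂ) * Complex.I * (f : ℂ) * (((m : ℕ) : ℂ) - ((n : ℕ) : ℂ)))

/-- the point on the circle -/
noncomputable def zpt (t : ℝ) : ℂ := Complex.exp (-(2 * (Real.pi : ℂ) * Complex.I * (t : ℂ)))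

/-- the trigonometric polynomial -/
noncomputable def trigP {N : ℕ} (x : Fin N → ℂ) (t : ℝ) : ℂ := ∑ n : Fin N, x n * zpt t ^ (n : ℕ)

lemma norm_zpt (t : ℝ) : ‖zpt t‖ = 1 := by
  have : zpt t = Complex.exp ((-(2 * Real.pi * t) : ℝ) * Complex.I) := by
    unfold zpt; congr 1; push_cast; ring
  rw [this, Complex.norm_exp_ofReal_mul_I]

lemma continuous_zpt : Continuous zpt := by
  unfold zpt; fun_prop

lemma continuous_trigP {N : ℕ} (x : Fin N → ℂ) : Continuous (trigP x) := by
  unfold trigP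
  have := continuous_zpt
  fun_prop

lemma conj_zpt_pow_mul (t : ℝ) (m n : ℕ) :
    star (zpt t ^ m) * zpt t ^ n =
      Complex.exp (2 * (Real.pi : ℂ) * Complex.I * (t : ℂ) * ((m : ℂ) - (n : ℂ))) := by
  unfold zpt
  rw [Complex.star_def, ← Complex.exp_nat_mul, ← Complex.exp_nat_mul, ← Complex.exp_conj, ← Complex.exp_add]
  congr 1
  have h2 : (starRingEnd ℂ) 2 = 2 := Complex.conj_ofNat 2
  simp [h2]
  ring

lemma quad_form {N : ℕ} (E : Set ℝ) (hE : E ⊆ Icc (-(1/2) : ℝ) (1/2)) (x : Fin N → ℂ) :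
    star x ⬝ᵥ (prolate1D N E *ᵥ x) = ((∫ t in E, ‖trigP x t‖ ^ 2 : ℝ) : ℂ) := by
  have hIntg : ∀ g : ℝ → ℂ, Continuous g → IntegrableOn g E := fun g hg =>
    (hg.continuousOn.integrableOn_compact isCompact_Icc).mono_set hE
  have key : ∀ t : ℝ, ((‖trigP x t‖ ^ 2 : ℝ) : ℂ) = ∑ m : Fin N, ∑ n : Fin N,
      star (x m) * (Complex.exp (2 * (Real.pi : ℂ) * Complex.I * (t : ℂ) *
        (((m : ℕ) : ℂ) - ((n : ℕ) : ℂ))) * x n) := by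
    intro t
    have h1 : ((‖trigP x t‖ ^ 2 : ℝ) : ℂ) = star (trigP x t) * trigP x t := by
      rw [Complex.star_def, Complex.conj_mul']; push_cast; rfl
    rw [h1]
    unfold trigP
    rw [star_sum, Finset.sum_mul_sum]
    refine Finset.sum_congr rfl fun m _ => Finset.sum_congr rfl fun n _ => ?_
    rw [← conj_zpt_pow_mul, star_mul']
    ring
  rw [← integral_complex_ofReal]
  simp_rw [key]
  rw [integral_finsetSum]
  · simp only [dotProduct, mulVec, Finset.mul_sum]
    refine Finset.sum_congr rfl fun m _ => ?_
    rw [integral_finsetSum]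
    · refine Finset.sum_congr rfl fun n _ => ?_
      rw [integral_const_mul, integral_mul_const]
      rfl
    · intro n _
      exact hIntg _ (by fun_prop)
  · intro m _
    exact hIntg _ (by fun_prop)

lemma full_one (N : ℕ) : prolate1D N (Icc (-(1/2) : ℝ) (1/2)) = 1 := by
  ext m n
  unfold prolate1D
  rw [integral_Icc_eq_integral_Ioc, ← intervalIntegral.integral_of_le (by norm_num)]
  by_cases h : m = n
  · subst h
    simp
    norm_num
  · rw [Matrix.one_apply_ne h]
    have hne : ((m : ℕ) : ℂ) - ((n : ℕ) : ℂ) ≠ 0 := by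
      rw [sub_ne_zero]
      intro h'
      exact h (Fin.ext (by exact_mod_cast h'))
    have hc : (2 * (Real.pi : ℂ) * Complex.I * (((m : ℕ) : ℂ) - ((n : ℕ) : ℂ))) ≠ 0 := by
      have := Real.pi_ne_zero
      simp [hne]
    have := @integral_exp_mul_complex (-(1/2)) (1/2) _ hc
    rw [show (fun f : ℝ => Complex.exp (2 * (Real.pi : ℂ) * Complex.I * (f : ℂ) *
      (((m : ℕ) : ℂ) - ((n : ℕ) : ℂ)))) = fun f : ℝ => Complex.exp ((2 * (Real.pi : ℂ) * Complex.I * (((m : ℕ) : ℂ) - ((n : ℕ) : ℂ))) * f) from by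
        funext f; congr 1; ring]
    rw [this]
    rw [div_eq_zero_iff]
    left
    rw [sub_eq_zero, Complex.exp_eq_exp_iff_exists_int]
    refine ⟨(m : ℤ) - (n : ℤ), ?_⟩
    push_cast
    ring

lemma parseval {N : ℕ} (x : Fin N → ℂ) :
    ∫ t in Icc (-(1/2) : ℝ) (1/2), ‖trigP x t‖ ^ 2 = ∑ n, ‖x n‖ ^ 2 := by
  have h := quad_form (Icc (-(1/2) : ℝ) (1/2)) subset_rfl x
  rw [full_one, one_mulVec] at h
  apply Complex.ofReal_injective
  rw [← h]
  simp [dotProduct, Complex.conj_mul']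

lemma interp (M : ℕ) (hM : 0 < M) (q : Polynomial ℂ) (hq : q.natDegree < M) (w z0 ω : ℂ)
    (hw : w ≠ 0) (hω : IsPrimitiveRoot ω M) :
    q.eval z0 * M = ∑ k : Fin M, q.eval (w * ω ^ (k : ℕ)) *
      ∑ j : Fin M, (z0 / (w * ω ^ (k : ℕ))) ^ (j : ℕ) := by
  have hω0 : ω ≠ 0 := hω.ne_zero hM.ne'
  have orth : ∀ i j : Fin M, ∑ k : Fin M, (w * ω ^ (k : ℕ)) ^ (i : ℕ) *
      (z0 / (w * ω ^ (k : ℕ))) ^ (j : ℕ) = if i = j then (M : ℂ) * z0 ^ (i : ℕ) else 0 := by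
    intro i j
    have hterm : ∀ k : Fin M, (w * ω ^ (k : ℕ)) ^ (i : ℕ) * (z0 / (w * ω ^ (k : ℕ))) ^ (j : ℕ)
        = (w ^ (i : ℕ) / w ^ (j : ℕ) * z0 ^ (j : ℕ)) * (ω ^ (i : ℕ) / ω ^ (j : ℕ)) ^ (k : ℕ) := by
      intro k
      have e1 : (ω ^ (j : ℕ)) ^ (k : ℕ) = (ω ^ (k : ℕ)) ^ (j : ℕ) := by
        rw [← pow_mul, ← pow_mul, mul_comm]
      have e2 : (ω ^ (i : ℕ)) ^ (k : ℕ) = (ω ^ (k : ℕ)) ^ (i : ℕ) := by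
        rw [← pow_mul, ← pow_mul, mul_comm]
      have h3 : ω ^ (k : ℕ) ≠ 0 := pow_ne_zero _ hω0
      simp only [div_pow, mul_pow, e1, e2]
      generalize ω ^ (k : ℕ) = y at h3
      have h4 : y ^ (j : ℕ) ≠ 0 := pow_ne_zero _ h3
      have h5 : w ^ (j : ℕ) ≠ 0 := pow_ne_zero _ hw
      generalize y ^ (j : ℕ) = yj at h4
      generalize w ^ (j : ℕ) = wj at h5
      field_simp
    simp_rw [hterm]
    rw [← Finset.mul_sum, Fin.sum_univ_eq_sum_range (fun k => (ω ^ (i : ℕ) / ω ^ (j : ℕ)) ^ k)]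
    split_ifs with h
    · subst h
      rw [div_self (pow_ne_zero _ hω0), div_self (pow_ne_zero _ hw)]
      simp
      ring
    · have hne : ω ^ (i : ℕ) / ω ^ (j : ℕ) ≠ 1 := by
        intro h1
        rw [div_eq_one_iff_eq (pow_ne_zero _ hω0)] at h1
        exact h (Fin.ext (hω.pow_inj i.2 j.2 h1))
      rw [geom_sum_eq hne]
      have : (ω ^ (i : ℕ) / ω ^ (j : ℕ)) ^ M = 1 := by
        rw [div_pow, ← pow_mul, ← pow_mul, mul_comm (i : ℕ), mul_comm (j : ℕ), pow_mul, pow_mul,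
          hω.pow_eq_one]
        simp
      rw [this]; simp
  have hev : ∀ z, q.eval z = ∑ i : Fin M, q.coeff i * z ^ (i : ℕ) := by
    intro z
    rw [Polynomial.eval_eq_sum_range' hq, Fin.sum_univ_eq_sum_range (fun i => q.coeff i * z ^ i)]
  simp_rw [hev, Finset.sum_mul_sum]
  rw [Finset.sum_comm, Finset.sum_mul]
  refine Finset.sum_congr rfl fun i _ => ?_
  rw [Finset.sum_comm]
  simp_rw [mul_assoc, ← Finset.mul_sum, orth]
  simp
  left; ring

/-- node -/
noncomputable def nodeT (M k : ℕ) : ℝ := (k : ℝ) / M - 1 / 2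

lemma zpt_half (t s : ℝ) : ‖(1 + zpt t / zpt s) / 2‖ = |Real.cos (π * (t - s))| := by
  have h : (1 + zpt t / zpt s) / 2 =
      Complex.exp ((-(π * (t - s)) : ℝ) * Complex.I) * (Real.cos (π * (t - s)) : ℂ) := by
    unfold zpt
    rw [← Complex.exp_sub, Complex.ofReal_cos, Complex.cos, mul_div_assoc', mul_add, ← Complex.exp_add, ← Complex.exp_add, add_comm (1 : ℂ)]
    congr 1
    rw [add_comm]
    congr 1
    · rw [← Complex.exp_zero]; congr 1; push_cast; ring
      
    · congr 1; push_cast; ring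
  rw [h, norm_mul, Complex.norm_exp_ofReal_mul_I, one_mul, Complex.norm_real, Real.norm_eq_abs]

lemma trigP_sup {N : ℕ} (x : Fin N → ℂ) (t : ℝ) : ‖trigP x t‖ ≤ √(N * ∑ n, ‖x n‖ ^ 2) := by
  apply Real.le_sqrt_of_sq_le
  have h1 : ‖trigP x t‖ ≤ ∑ n, ‖x n‖ := by
    refine (norm_sum_le _ _).trans (le_of_eq ?_)
    refine Finset.sum_congr rfl fun n _ => ?_
    rw [norm_mul, norm_pow, norm_zpt]; simp
  calc ‖trigP x t‖ ^ 2 ≤ (∑ n, ‖x n‖) ^ 2 := by gcongr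
    _ ≤ _ := by simpa using sq_sum_le_card_mul_sum_sq (s := Finset.univ) (f := fun n => ‖x n‖)

lemma decay {N : ℕ} (hN : 0 < N) (d : ℕ) (x : Fin N → ℂ) (s ρ : ℝ) (hρ : 0 ≤ ρ)
    (hz : ∀ k : Fin (N + d), trigP x (nodeT (N + d) k) = 0 ∨
      |Real.cos (π * (nodeT (N + d) k - s))| ≤ ρ) :
    ‖trigP x s‖ ≤ (N + d : ℕ) * (√(N * ∑ n, ‖x n‖ ^ 2) * ρ ^ d) := by
  set M := N + d with hMdef
  have hM : 0 < M := by omega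
  have hM' : (M : ℝ) ≠ 0 := by positivity
  have hMc : (M : ℂ) ≠ 0 := by exact_mod_cast hM.ne'
  let p : Polynomial ℂ := ∑ n : Fin N, Polynomial.C (x n) * Polynomial.X ^ (n : ℕ)
  let g : Polynomial ℂ := Polynomial.C (1/2) * (1 + Polynomial.C (1 / zpt s) * Polynomial.X)
  have hp : ∀ t, p.eval (zpt t) = trigP x t := by
    intro t; simp [p, trigP, Polynomial.eval_finsetSum]
  have hpd : p.natDegree ≤ N - 1 := by
    apply Polynomial.natDegree_sum_le_of_forall_le
    intro n _
    refine (Polynomial.natDegree_C_mul_X_pow_le _ _).trans ?_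
    have := n.2; omega
  have hgd : g.natDegree ≤ 1 := by
    refine Polynomial.natDegree_C_mul_le _ _ |>.trans ?_
    refine Polynomial.natDegree_add_le_of_degree_le (by simp) ?_
    exact (Polynomial.natDegree_C_mul_le _ _).trans (by simp)
  have hqd : (p * g ^ d).natDegree < M := by
    have h1 := Polynomial.natDegree_mul_le (p := p) (q := g ^ d)
    have h2 := Polynomial.natDegree_pow_le (p := g) (n := d)
    have h3 : d * g.natDegree ≤ d * 1 := Nat.mul_le_mul_left _ hgd
    omega
  have hzs : zpt s ≠ 0 := by
    intro h; have := norm_zpt s; rw [h] at this; simp at this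
  have hg : ∀ t, g.eval (zpt t) = (1 + zpt t / zpt s) / 2 := by
    intro t; simp [g]; ring
  have hω0 := (Complex.isPrimitiveRoot_exp M hM.ne').inv
  set ω : ℂ := (Complex.exp (2 * π * Complex.I / M))⁻¹ with hωdef
  have hw : zpt (-(1/2)) ≠ 0 := by
    intro h; have := norm_zpt (-(1/2)); rw [h] at this; simp at this
  have hnode : ∀ k : ℕ, zpt (-(1/2)) * ω ^ k = zpt (nodeT M k) := by
    intro k
    rw [hωdef, ← Complex.exp_neg, ← Complex.exp_nat_mul]
    unfold zpt nodeT
    rw [← Complex.exp_add]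
    congr 1
    push_cast
    field_simp
    ring
  have hI := interp M hM (p * g ^ d) hqd (zpt (-(1/2))) (zpt s) ω hw hω0
  simp_rw [hnode, Polynomial.eval_mul, Polynomial.eval_pow, hp, hg] at hI
  rw [div_self hzs, show ((1 : ℂ) + 1) / 2 = 1 by norm_num, one_pow, mul_one] at hI
  have hb : ‖trigP x s * M‖ ≤ ∑ k : Fin M, (√(N * ∑ n, ‖x n‖ ^ 2) * ρ ^ d) * M := by
    rw [hI]
    refine (norm_sum_le _ _).trans (Finset.sum_le_sum fun k _ => ?_)
    rw [norm_mul]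
    have hD : ‖∑ j : Fin M, (zpt s / zpt (nodeT M k)) ^ (j : ℕ)‖ ≤ M := by
      refine (norm_sum_le _ _).trans ?_
      simp [norm_zpt]
    refine mul_le_mul ?_ hD (norm_nonneg _) (by positivity)
    rcases hz k with h | h
    · rw [h]; simp; positivity
    · rw [norm_mul, norm_pow, zpt_half]
      have := trigP_sup x (nodeT M k)
      gcongr
  rw [norm_mul, Complex.norm_natCast] at hb
  simp only [Finset.sum_const, Finset.card_univ, Fintype.card_fin, nsmul_eq_mul] at hb
  rw [← mul_assoc] at hb
  exact le_of_mul_le_mul_right hb (by positivity)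

/-- lower bound for an ordered eigenvalue -/
lemma minmax {N : ℕ} (A : Matrix (Fin N) (Fin N) ℂ) (hA : A.IsHermitian) (μ : Fin N → ℝ)
    (hμ : Antitone μ) (σ : Equiv.Perm (Fin N)) (hσ : hA.eigenvalues = μ ∘ σ) (l : Fin N)
    {ι : Type*} [Fintype ι] (Z : ι → (Fin N → ℂ) →ₗ[ℂ] ℂ) (hZ : Fintype.card ι + l < N)
    (c : ℝ) (hc : ∀ x : Fin N → ℂ, (∀ i, Z i x = 0) → c * ∑ n, ‖x n‖ ^ 2 ≤ (star x ⬝ᵥ (A *ᵥ x)).re) :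
    c ≤ μ l := by
  let v := hA.eigenvectorBasis
  let L : EuclideanSpace ℂ (Fin N) →ₗ[ℂ] (ι ⊕ Fin l → ℂ) := LinearMap.pi
    (Sum.elim (fun i => (Z i).comp (WithLp.linearEquiv 2 ℂ (Fin N → ℂ)).toLinearMap)
      (fun j => (innerSL ℂ (v (σ.symm ⟨j, j.2.trans l.2⟩))).toLinearMap))
  have hker : ∃ x ∈ LinearMap.ker L, x ≠ 0 := by
    apply (Submodule.ne_bot_iff _).1
    apply LinearMap.ker_ne_bot_of_finrank_lt
    simpa using hZ
  obtain ⟨x, hx, hx0⟩ := hker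
  have hLx : ∀ i, L x i = 0 := fun i => by rw [LinearMap.mem_ker.1 hx]; rfl
  have h1 := hc x.ofLp (fun i => hLx (Sum.inl i))
  have h2 : ∀ i : Fin N, (σ i : ℕ) < l → inner ℂ (v i) x = 0 := by
    intro i hi
    have := hLx (Sum.inr ⟨σ i, hi⟩)
    simpa [L] using this
  have hnorm : ∑ n, ‖x.ofLp n‖ ^ 2 = ‖x‖ ^ 2 := (EuclideanSpace.norm_sq_eq x).symm
  have hpos : 0 < ‖x‖ ^ 2 := by positivity
  have hq : (star x.ofLp ⬝ᵥ (A *ᵥ x.ofLp)).re = ∑ i, hA.eigenvalues i * ‖inner ℂ (v i) x‖ ^ 2 := by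
    have e1 : star x.ofLp ⬝ᵥ (A *ᵥ x.ofLp) = inner ℂ x (WithLp.toLp 2 (A *ᵥ x.ofLp)) := by
      rw [EuclideanSpace.inner_eq_star_dotProduct, dotProduct_comm]
    have e2 : ∀ i, inner ℂ (v i) (WithLp.toLp 2 (A *ᵥ x.ofLp)) =
        (hA.eigenvalues i : ℂ) * inner ℂ (v i) x := by
      intro i
      have := hA.mulVec_eigenvectorBasis i
      rw [EuclideanSpace.inner_eq_star_dotProduct, EuclideanSpace.inner_eq_star_dotProduct]
      simp only
      rw [dotProduct_comm, dotProduct_mulVec]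
      have e3 : star (v i).ofLp ᵥ* A = star (A *ᵥ (v i).ofLp) := by
        rw [star_mulVec, hA.eq]
      rw [e3, this, dotProduct_comm]
      simp [v]
    rw [e1, ← v.sum_inner_mul_inner, Complex.re_sum]
    refine Finset.sum_congr rfl fun i _ => ?_
    rw [e2, ← inner_conj_symm]
    rw [mul_left_comm, Complex.conj_mul', Complex.re_ofReal_mul]
    norm_cast
  have hle : ∑ i, hA.eigenvalues i * ‖inner ℂ (v i) x‖ ^ 2 ≤ μ l * ‖x‖ ^ 2 := by
    rw [← v.sum_sq_norm_inner_right x, Finset.mul_sum]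
    refine Finset.sum_le_sum fun i _ => ?_
    by_cases hi : (σ i : ℕ) < l
    · rw [h2 i hi]; simp
    · rw [hσ]
      have : μ (σ i) ≤ μ l := hμ (by rw [Fin.le_def]; omega)
      simp only [Function.comp]
      gcongr
  rw [hnorm, hq] at h1
  exact le_of_mul_le_mul_right (h1.trans hle) hpos

lemma count_nodes (M : ℕ) (hM : 0 < M) (a b : ℝ) (ha : -(1/2) ≤ a) (hb0 : -(1/2) ≤ b) (hb : b < 1/2) :
    (M : ℝ) * (b - a) - 1 ≤
      ((Finset.univ.filter fun k : Fin M => nodeT M k ∈ Icc a b).card : ℝ) := by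
  have hM' : (0 : ℝ) < M := by exact_mod_cast hM
  have hsub : Finset.Icc ⌈(M : ℝ) * (a + 1/2)⌉₊ ⌊(M : ℝ) * (b + 1/2)⌋₊ ⊆
      (Finset.univ.filter fun k : Fin M => nodeT M k ∈ Icc a b).map Fin.valEmbedding := by
    intro k hk
    rw [Finset.mem_Icc] at hk
    have h1 := Nat.ceil_le.1 hk.1
    have h2 : (k : ℝ) ≤ M * (b + 1/2) :=
      (Nat.le_floor_iff (mul_nonneg hM'.le (by linarith))).1 hk.2
    have h3 : k < M := by
      have : (k : ℝ) < M := by nlinarith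
      exact_mod_cast this
    rw [Finset.mem_map]
    refine ⟨⟨k, h3⟩, ?_, rfl⟩
    rw [Finset.mem_filter]
    refine ⟨Finset.mem_univ _, ?_, ?_⟩
    · unfold nodeT
      rw [le_sub_iff_add_le, le_div_iff₀ hM']
      linarith
    · unfold nodeT
      rw [sub_le_iff_le_add, div_le_iff₀ hM']
      linarith
  have hc := Finset.card_le_card hsub
  rw [Finset.card_map, Nat.card_Icc] at hc
  have h1 := Nat.ceil_lt_add_one (a := (M : ℝ) * (a + 1/2)) (mul_nonneg hM'.le (by linarith))
  have h2 := Nat.lt_floor_add_one ((M : ℝ) * (b + 1/2))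
  have h3 : ((⌊(M : ℝ) * (b + 1/2)⌋₊ + 1 : ℕ) : ℝ) ≤
      ((Finset.univ.filter fun k : Fin M => nodeT M k ∈ Icc a b).card : ℝ)
        + (⌈(M : ℝ) * (a + 1/2)⌉₊ : ℝ) := by
    rw [← Nat.cast_add]
    exact_mod_cast (by omega)
  push_cast at h3
  linarith

lemma cos_bound (η u : ℝ) (h0 : 0 < η) (h1 : η ≤ |u|) (h2 : |u| ≤ 1 - η) :
    |Real.cos (π * u)| ≤ Real.cos (π * η) := by
  have hpi := Real.pi_pos
  rw [← Real.cos_abs (π * u), abs_mul, abs_of_pos hpi, abs_le]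
  constructor
  · rw [← Real.cos_pi_sub]
    apply Real.cos_le_cos_of_nonneg_of_le_pi
    · positivity
    · nlinarith
    · nlinarith
  · apply Real.cos_le_cos_of_nonneg_of_le_pi
    · positivity
    · nlinarith
    · nlinarith

theorem multiband_eigenvalue_cluster_near_one
    (J : ℕ) (hJ : 1 ≤ J) (f W : Fin J → ℝ)
    (hW : ∀ i, W i ∈ Set.Ioo (0 : ℝ) (1 / 2))
    (hsub : ∀ i, Set.Icc (f i - W i) (f i + W i) ⊆ Set.Icc (-(1 / 2) : ℝ) (1 / 2))
    (hdisj : ∀ i j, i ≠ j →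
      Disjoint (Set.Icc (f i - W i) (f i + W i)) (Set.Icc (f j - W j) (f j + W j)))
    (ε : ℝ) (hε : ε ∈ Set.Ioo (0 : ℝ) 1) :
    ∃ (Chat₁ Chat₂ : ℝ) (Nhat₁ : ℕ), 0 < Chat₁ ∧ 0 < Chat₂ ∧ 1 ≤ Nhat₁ ∧
      ∀ (N : ℕ), Nhat₁ ≤ N →
        ∀ (hA : (prolate1D N (⋃ i, Set.Icc (f i - W i) (f i + W i))).IsHermitian)
          (μ : Fin N → ℝ),
          Antitone μ →
          (∃ σ : Equiv.Perm (Fin N), hA.eigenvalues = μ ∘ σ) →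
          ∀ l : Fin N, (l : ℕ) ≤ J - 1 + ∑ i, ⌊2 * (N : ℝ) * W i * (1 - ε)⌋₊ →
            1 - μ l ≤ Chat₁ * (N : ℝ) ^ 2 * Real.exp (-Chat₂ * (N : ℝ)) := by
  obtain ⟨hε0, hε1⟩ := hε
  have hWp : ∀ i, 0 < W i := fun i => (hW i).1
  have hWl : ∀ i, W i < 1 / 2 := fun i => (hW i).2
  have : Nonempty (Fin J) := ⟨⟨0, hJ⟩⟩
  have hS : 0 < ∑ i, W i := Finset.sum_pos (fun i _ => hWp i) Finset.univ_nonempty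
  set S := ∑ i, W i with hSdef
  obtain ⟨η, hη0, hηW⟩ : ∃ η : ℝ, 0 < η ∧ ∀ i, η ≤ ε * W i / 4 := by
    obtain ⟨i0, h0⟩ := Finite.exists_min W
    refine ⟨ε * W i0 / 4, by have := hWp i0; positivity, fun i => ?_⟩
    have := h0 i
    gcongr
  have hηW' : ∀ i, η ≤ W i / 4 := fun i => (hηW i).trans (by nlinarith [hWp i])
  have hη8 : η < 1 / 8 := by
    have h1 := hηW' ⟨0, hJ⟩
    have h2 := hWl ⟨0, hJ⟩
    linarith
  have hend : ∀ i, -(1/2) ≤ f i - W i ∧ f i + W i ≤ 1 / 2 := by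
    intro i
    have := hWp i
    exact ⟨(hsub i ⟨le_rfl, by linarith⟩).1, (hsub i ⟨by linarith, le_rfl⟩).2⟩
  set ρ := Real.cos (π * η) with hρdef
  have hpi := Real.pi_pos
  have hρ0 : 0 < ρ := by
    apply Real.cos_pos_of_mem_Ioo
    constructor <;> nlinarith
  have hρ1 : ρ < 1 := by
    have := Real.cos_lt_cos_of_nonneg_of_le_pi (x := 0) (y := π * η) le_rfl (by nlinarith) (by positivity)
    simpa using this
  set c := -Real.log ρ with hc
  have hc0 : 0 < c := by have := Real.log_neg hρ0 hρ1; linarith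
  have hρc : ρ = Real.exp (-c) := by rw [hc, neg_neg, Real.exp_log hρ0]
  set a := c * ε * S with ha
  have ha0 : 0 < a := by positivity
  refine ⟨(1 + S) ^ 2 * Real.exp (2 * c) / a, a, max 1 ⌈4 * J / (ε * S)⌉₊, by positivity, ha0,
    le_max_left _ _, ?_⟩
  intro N hN hA μ hμ ⟨σ, hσ⟩ l hl
  have hN1 : 0 < N := (le_max_left _ _).trans hN
  have hNr : (0 : ℝ) < N := by exact_mod_cast hN1
  have hN2 : 4 * (J : ℝ) ≤ N * (ε * S) := by
    have h1 : (4 * J / (ε * S) : ℝ) ≤ N := Nat.ceil_le.1 ((le_max_right _ _).trans hN)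
    rwa [div_le_iff₀ (by positivity)] at h1
  set d := ⌊(N : ℝ) * (ε * S)⌋₊ with hd
  have hd1 : (d : ℝ) ≤ N * (ε * S) := Nat.floor_le (by positivity)
  have hd2 : (N : ℝ) * (ε * S) < d + 1 := Nat.lt_floor_add_one _
  set E := ⋃ i, Set.Icc (f i - W i) (f i + W i) with hE
  have hEsub : E ⊆ Icc (-(1/2) : ℝ) (1/2) := iUnion_subset hsub
  have hEm : MeasurableSet E := MeasurableSet.iUnion fun i => measurableSet_Icc
  -- the discarded nodes
  let D : Fin J → Finset (Fin (N + d)) := fun i =>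
    Finset.univ.filter fun k => nodeT (N + d) k ∈ Icc (f i - W i + η) (f i + W i - η)
  have hDmem : ∀ i k, k ∈ D i ↔ nodeT (N + d) k ∈ Icc (f i - W i + η) (f i + W i - η) := by
    intro i k; simp [D]
  let T : Finset (Fin (N + d)) := (Finset.univ.biUnion D)ᶜ
  have hDcard : (Finset.univ.biUnion D).card = ∑ i, (D i).card := by
    apply Finset.card_biUnion
    intro i _ j _ hij
    refine Finset.disjoint_left.2 ?_
    intro k hk hk'
    rw [hDmem] at hk hk'
    exact (Set.disjoint_left.1 (hdisj i j hij)) (a := nodeT (N + d) k) ⟨by linarith [hk.1], by linarith [hk.2]⟩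
      ⟨by linarith [hk'.1], by linarith [hk'.2]⟩
  have hTcard : T.card + ∑ i, (D i).card = N + d := by
    rw [← hDcard, add_comm, Finset.card_add_card_compl, Fintype.card_fin]
  have hDlow : ∀ i, 2 * N * W i * (1 - ε / 4) - 1 ≤ ((D i).card : ℝ) := by
    intro i
    have h := count_nodes (N + d) (by omega) (f i - W i + η) (f i + W i - η)
      (by linarith [(hend i).1]) (by linarith [(hend i).1, hηW' i, hWp i]) (by linarith [(hend i).2])
    refine le_trans ?_ h
    have h1 : 2 * W i * (1 - ε / 4) ≤ (f i + W i - η - (f i - W i + η)) := by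
      linarith [hηW i]
    have h2 : 0 ≤ 2 * W i * (1 - ε / 4) := by
      have := hWp i
      exact mul_nonneg (by linarith) (by linarith)
    have h3 : (N : ℝ) ≤ ((N + d : ℕ) : ℝ) := by push_cast; linarith [Nat.cast_nonneg (α := ℝ) d]
    have h4 := mul_le_mul h3 h1 h2 (by positivity)
    linarith
  have hcount : Fintype.card T + l < N := by
    rw [Fintype.card_coe]
    have h1 : ∑ i, (2 * N * W i * (1 - ε / 4) - 1) ≤ ∑ i, ((D i).card : ℝ) :=
      Finset.sum_le_sum fun i _ => hDlow i
    have h2 : ∑ i, (2 * N * W i * (1 - ε / 4) - 1) = 2 * N * S * (1 - ε / 4) - J := by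
      rw [Finset.sum_sub_distrib, ← Finset.sum_mul, ← Finset.mul_sum]; simp [hSdef]
    have h3 : ∑ i, ((⌊2 * (N : ℝ) * W i * (1 - ε)⌋₊ : ℕ) : ℝ) ≤ 2 * N * S * (1 - ε) := by
      rw [hSdef, Finset.mul_sum, Finset.sum_mul]
      refine Finset.sum_le_sum fun i _ => Nat.floor_le ?_
      have := hWp i
      exact mul_nonneg (by positivity) (by linarith)
    have h4 : (l : ℝ) + 1 ≤ J + ∑ i, ((⌊2 * (N : ℝ) * W i * (1 - ε)⌋₊ : ℕ) : ℝ) := by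
      have : (l : ℕ) + 1 ≤ J + ∑ i, ⌊2 * (N : ℝ) * W i * (1 - ε)⌋₊ := by omega
      exact_mod_cast this
    have h5 : (T.card : ℝ) + ∑ i, ((D i).card : ℝ) = N + d := by exact_mod_cast hTcard
    have h6 : (T.card : ℝ) + l < N := by nlinarith
    exact_mod_cast h6
  let Z : T → (Fin N → ℂ) →ₗ[ℂ] ℂ := fun k =>
    ∑ n : Fin N, (zpt (nodeT (N + d) k.1) ^ (n : ℕ)) • LinearMap.proj n
  have hZ : ∀ k x, Z k x = trigP x (nodeT (N + d) k.1) := by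
    intro k x
    simp [Z, trigP, mul_comm]
  set B : ℝ := ((N + d : ℕ) : ℝ) ^ 2 * (N * (ρ ^ d) ^ 2) with hB
  have hmain : 1 - B ≤ μ l := by
    refine minmax _ hA μ hμ σ hσ l Z hcount _ ?_
    intro x hx
    rw [quad_form E hEsub x, Complex.ofReal_re]
    set X := ∑ n, ‖x n‖ ^ 2 with hX
    have hX0 : 0 ≤ X := by positivity
    have hpt : ∀ s ∈ Icc (-(1/2) : ℝ) (1/2) \ E, ‖trigP x s‖ ^ 2 ≤ B * X := by
      intro s hs
      have hdec := decay hN1 d x s ρ hρ0.le (by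
        intro k
        by_cases hk : k ∈ T
        · left
          rw [← hZ ⟨k, hk⟩, hx]
        · right
          have : ∃ i, k ∈ D i := by simpa [T] using hk
          obtain ⟨i, hi⟩ := this
          rw [hDmem] at hi
          have hsE : s ∉ Icc (f i - W i) (f i + W i) := fun h => hs.2 (mem_iUnion.2 ⟨i, h⟩)
          obtain ⟨e1, e2⟩ := hend i
          obtain ⟨s1, s2⟩ := hs.1
          obtain ⟨i1, i2⟩ := hi
          apply cos_bound _ _ hη0
          · rw [le_abs]
            by_contra! hcon
            exact hsE ⟨by linarith, by linarith⟩
          · rw [abs_le]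
            constructor <;> linarith)
      calc ‖trigP x s‖ ^ 2 ≤ ((N + d : ℕ) * (√(N * X) * ρ ^ d)) ^ 2 := by gcongr
        _ = B * X := by
          rw [mul_pow, mul_pow, Real.sq_sqrt (by positivity), hB]; ring
    have hIntg : IntegrableOn (fun s => ‖trigP x s‖ ^ 2) (Icc (-(1/2) : ℝ) (1/2)) :=
      (((continuous_trigP x).norm.pow 2).continuousOn).integrableOn_compact isCompact_Icc
    have hsplit : ∫ s in Icc (-(1/2) : ℝ) (1/2) \ E, ‖trigP x s‖ ^ 2 =
        X - ∫ s in E, ‖trigP x s‖ ^ 2 := by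
      rw [setIntegral_sdiff hEm hIntg hEsub, parseval]
    have hvol : volume.real (Icc (-(1/2) : ℝ) (1/2) \ E) ≤ 1 := by
      have h1 : volume.real (Icc (-(1/2) : ℝ) (1/2) \ E) ≤ volume.real (Icc (-(1/2) : ℝ) (1/2)) :=
        measureReal_mono sdiff_subset (by simp)
      have h2 : volume.real (Icc (-(1/2) : ℝ) (1/2)) = 1 := by
        rw [Real.volume_real_Icc_of_le (by norm_num)]; norm_num
      linarith
    have hBX : 0 ≤ B * X := by positivity
    have hle : ∫ s in Icc (-(1/2) : ℝ) (1/2) \ E, ‖trigP x s‖ ^ 2 ≤ B * X := by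
      calc ∫ s in Icc (-(1/2) : ℝ) (1/2) \ E, ‖trigP x s‖ ^ 2
          ≤ ∫ s in Icc (-(1/2) : ℝ) (1/2) \ E, B * X := by
            refine setIntegral_mono_on (hIntg.mono_set sdiff_subset) ?_ (measurableSet_Icc.diff hEm) hpt
            refine integrableOn_const ?_
            exact ((measure_mono sdiff_subset).trans_lt (by simp)).ne
        _ = volume.real (Icc (-(1/2) : ℝ) (1/2) \ E) * (B * X) := by
            rw [setIntegral_const, smul_eq_mul]
        _ ≤ 1 * (B * X) := by gcongr
        _ = B * X := one_mul _
    linarith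
  have hBle : B ≤ (1 + S) ^ 2 * Real.exp (2 * c) / a * (N : ℝ) ^ 2 * Real.exp (-a * (N : ℝ)) := by
    have h1 : ((N + d : ℕ) : ℝ) ≤ N * (1 + S) := by
      push_cast
      have : (N : ℝ) * (ε * S) ≤ N * S := by gcongr; nlinarith
      linarith
    have h2 : (ρ ^ d) ^ 2 ≤ Real.exp (2 * c) * (Real.exp (-a * N) * Real.exp (-a * N)) := by
      rw [hρc, ← Real.exp_nat_mul, ← Real.exp_nat_mul, ← Real.exp_add, ← Real.exp_add]
      apply Real.exp_le_exp.2
      push_cast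
      have := mul_le_mul_of_nonneg_left hd2.le hc0.le
      rw [ha]
      linarith
    have h3 : (N : ℝ) * Real.exp (-a * N) ≤ 1 / a := by
      rw [le_div_iff₀ ha0, neg_mul, Real.exp_neg, mul_assoc, mul_comm, mul_assoc,
        inv_mul_le_iff₀ (Real.exp_pos _)]
      have := Real.add_one_le_exp (a * N)
      linarith
    calc B ≤ (N * (1 + S)) ^ 2 * (N * (Real.exp (2 * c) * (Real.exp (-a * N) * Real.exp (-a * N)))) := by
          rw [hB]; gcongr
      _ = (1 + S) ^ 2 * Real.exp (2 * c) * N ^ 2 * Real.exp (-a * N) * (N * Real.exp (-a * N)) := by ring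
      _ ≤ (1 + S) ^ 2 * Real.exp (2 * c) * N ^ 2 * Real.exp (-a * N) * (1 / a) := by gcongr
      _ = _ := by ring
  linarith
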